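/- Let n ≥ 2 and 1 ≤ M ≤ n−1 be integers, let φ ∈ ℝ, and let k₁, …, k_M be distinct elements of (2π/n)·{0,…,n−1}. Define the plane-wave Slater determinant state Ψ in ℂ^{2ⁿ}, indexed by subsets S ⊆ {0,…,n−1}, by Ψ(S) = n^{−M/2} det[ e^{i(k_j − φ/n) t_l} ]_{j,l=1}^{M} if S = {t₁ < t₂ < ⋯ < t_M} has size M, and Ψ(S) = 0 otherwise; Ψ is a unit vector. For 1 ≤ ℓ ≤ n/2 let A = {0, 1, …, ℓ−1}, and let ρ_A be the matrix indexed by subsets of A defined by ρ_A(S_A, S′_A) = ∑_{S_B ⊆ {ℓ,…,n−1}} Ψ(S_A ∪ S_B) conj(Ψ(S′_A ∪ S_B)). Then the second Rényi entropy satisfies S^{(2)}_A(Ψ) := −ln Tr(ρ_A²) ≥ ℓ²/n². -/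

import Mathlib

open Complex

noncomputable section

/-- The plane-wave Slater determinant state with momenta `k` and flux `φ`, as a wavefunction
on occupation configurations (subsets `S ⊆ {0,…,n−1}`):
`Ψ(S) = n^{−M/2} det[e^{i(k_j − φ/n)t_l}]` if `S = {t₁ < … < t_M}`, and `0` otherwise. -/
def slater (n M : ℕ) (k : Fin M → ℝ) (φ : ℝ) (S : Finset (Fin n)) : ℂ :=
  if h : S.card = M then
    (((n : ℝ) ^ (-(M : ℝ) / 2) : ℝ) : ℂ) *
      Matrix.det (Matrix.of fun j l : Fin M =>
        Complex.exp (Complex.I * ((k j - φ / n : ℝ) : ℂ) *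
          ((((S.orderIsoOfFin h l : Fin n) : ℕ) : ℝ) : ℂ)))
  else 0

/-!
A Slater determinant has a fixed particle number, so `ρ_A` is block diagonal with respect to the
parity of the number `N_A` of particles in `A`. Cauchy–Schwarz in each block gives
`Tr ρ_A² ≤ (1 + q²) / 2`, where `q` is the expectation of `(-1)^(N_A)`. Let `U` be the matrix whose
orthonormal rows are the occupied plane waves, and `σ` the diagonal matrix with entries `-1` on `A`
and `1` off `A`. By Cauchy–Binet `q = det (U σ Uᴴ)`, and the inequality `x ≤ exp (x - 1)` for the
eigenvalues of `(U σ Uᴴ)²` turns this into `q² ≤ exp (-4 V)`. Here `V = ∑ |C x y|²` over `x ∈ A`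
and `y ∉ A`, with `C = Uᴴ U`, is the variance of `N_A`.

It remains to see that `V ≥ 3 ℓ² / (4 n²)`. An interval of `L` sites contains `N = L M / n`
particles on average, and `V ≥ N - N²` because `|C x y|² ≤ C x x * C y y`. This is only useful for
`N` bounded away from `1`. However, `C x y` depends on `y - x` alone, so `V` increases with the
length of the interval up to half the ring, and one may shrink the interval until
`N ≤ 3 / 4`. This works for `M ≤ n / 2`; exchanging particles and holes, that is `C` and `1 - C`,
covers the other case.
-/

section MaximalMinors

open Finset Matrix

theorem sum_powersetCard_eq_sum_of_card_ne {ι β : Type*} [Fintype ι] [AddCommMonoid β] {M : ℕ}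
    {f : Finset ι → β} (hf : ∀ S, #S ≠ M → f S = 0) :
    ∑ S : Set.powersetCard ι M, f S = ∑ S, f S := by
  rw [← sum_subset (powersetCard M univ).subset_univ fun S _ hS ↦
    hf S fun h ↦ hS (mem_powersetCard_univ.2 h)]
  exact (sum_subtype _ (fun _ ↦ mem_powersetCard_univ) f).symm

variable {R ι : Type*} [CommRing R] [LinearOrder ι] {M : ℕ}

/-- The minor of `U` on the columns in `S`, taken in increasing order, and `0` unless `#S = M`.
The function `maximalMinor U` is the Slater determinant state whose orbitals are the rows of `U`. -/
def maximalMinor (U : Matrix (Fin M) ι R) (S : Finset ι) : R :=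
  if h : #S = M then (U.submatrix id (S.orderEmbOfFin h)).det else 0

theorem maximalMinor_of_card_eq (U : Matrix (Fin M) ι R) {S : Finset ι} (h : #S = M) :
    maximalMinor U S = (U.submatrix id (S.orderEmbOfFin h)).det :=
  dif_pos h

theorem maximalMinor_of_card_ne (U : Matrix (Fin M) ι R) {S : Finset ι} (h : #S ≠ M) :
    maximalMinor U S = 0 :=
  dif_neg h

theorem maximalMinor_smul (c : R) (U : Matrix (Fin M) ι R) (S : Finset ι) :
    maximalMinor (c • U) S = c ^ M * maximalMinor U S := by
  by_cases h : #S = M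
  · rw [maximalMinor_of_card_eq _ h, maximalMinor_of_card_eq _ h, submatrix_smul, Pi.smul_apply,
      Pi.smul_apply, det_smul, Fintype.card_fin]
  · simp [maximalMinor_of_card_ne _ h]

theorem maximalMinor_map_star [StarRing R] (U : Matrix (Fin M) ι R) (S : Finset ι) :
    maximalMinor (U.map star) S = star (maximalMinor U S) := by
  by_cases h : #S = M
  · rw [maximalMinor_of_card_eq _ h, maximalMinor_of_card_eq _ h, ← det_conjTranspose,
      ← det_transpose]
    rfl
  · simp [maximalMinor_of_card_ne _ h]

variable [Fintype ι]

theorem maximalMinor_mul_diagonal (U : Matrix (Fin M) ι R) (σ : ι → R) (S : Finset ι) :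
    maximalMinor (U * diagonal σ) S = (∏ t ∈ S, σ t) * maximalMinor U S := by
  by_cases h : #S = M
  · have hprod : ∏ l, σ (S.orderEmbOfFin h l) = ∏ t ∈ S, σ t := by
      conv_rhs => rw [← map_orderEmbOfFin_univ S h, prod_map]
      rfl
    rw [maximalMinor_of_card_eq _ h, maximalMinor_of_card_eq _ h, ← hprod, ← det_mul_row]
    congr 1
    ext j l
    simp [mul_comm]
  · simp [maximalMinor_of_card_ne _ h]

theorem exteriorPower_ιMulti_eq_sum_maximalMinor_smul (P : Matrix (Fin M) ι R) :
    exteriorPower.ιMulti R M (fun i ↦ P i) =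
      ∑ S : Set.powersetCard ι M, maximalMinor P S •
        exteriorPower.ιMulti_family R M (Pi.basisFun R ι) S := by
  rw [← ((Pi.basisFun R ι).exteriorPower M).sum_repr (exteriorPower.ιMulti R M fun i ↦ P i)]
  refine sum_congr rfl fun S _ ↦ ?_
  rw [exteriorPower.basis_repr_apply, exteriorPower.ιMultiDual_apply_ιMulti,
    exteriorPower.basis_apply, maximalMinor_of_card_eq _ S.prop]
  rfl

-- The Cauchy–Binet formula: expand the wedge product of the rows of `P` in the standard basis
-- and pair it with the wedge product of the rows of `Q`.
theorem det_mul_transpose_eq_sum_maximalMinor (P Q : Matrix (Fin M) ι R) :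
    (P * Qᵀ).det = ∑ S, maximalMinor P S * maximalMinor Q S := by
  let g (j : Fin M) : Module.Dual R (ι → R) := LinearMap.proj j ∘ₗ Q.mulVecLin
  have hg (j : Fin M) (v : ι → R) : g j v = (Q *ᵥ v) j := rfl
  have hPQ : exteriorPower.pairingDual R _ M (exteriorPower.ιMulti R M g)
      (exteriorPower.ιMulti R M fun i ↦ P i) = (P * Qᵀ).det := by
    rw [exteriorPower.pairingDual_ιMulti_ιMulti]
    congr 1
    ext i j
    simp [hg, mulVec, dotProduct, mul_apply, mul_comm]
  have hQ (S : Set.powersetCard ι M) :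
      exteriorPower.pairingDual R _ M (exteriorPower.ιMulti R M g)
        (exteriorPower.ιMulti_family R M (Pi.basisFun R ι) S) = maximalMinor Q S := by
    rw [exteriorPower.ιMulti_family, exteriorPower.pairingDual_ιMulti_ιMulti,
      maximalMinor_of_card_eq _ S.prop, ← det_transpose]
    congr 1
    ext i j
    simp [hg, Set.powersetCard.ofFinEmbEquiv_symm_apply]
  rw [← hPQ, exteriorPower_ιMulti_eq_sum_maximalMinor_smul, map_sum,
    ← sum_powersetCard_eq_sum_of_card_ne (M := M) fun S h ↦ by
      rw [maximalMinor_of_card_ne _ h, zero_mul]]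
  simp only [map_smul, hQ, smul_eq_mul]

theorem det_mul_diagonal_mul_conjTranspose (U : Matrix (Fin M) ι ℂ) (σ : ι → ℂ) :
    (U * diagonal σ * Uᴴ).det = ∑ S, (∏ t ∈ S, σ t) * normSq (maximalMinor U S) := by
  rw [show Uᴴ = (U.map star)ᵀ from rfl, det_mul_transpose_eq_sum_maximalMinor]
  refine sum_congr rfl fun S _ ↦ ?_
  rw [maximalMinor_mul_diagonal, maximalMinor_map_star, mul_assoc, RCLike.star_def, mul_conj]

theorem sum_normSq_maximalMinor {U : Matrix (Fin M) ι ℂ} (hU : U * Uᴴ = 1) :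
    ∑ S, normSq (maximalMinor U S) = 1 := by
  have h := det_mul_diagonal_mul_conjTranspose U 1
  rw [Pi.one_def, diagonal_one, Matrix.mul_one, hU, det_one] at h
  simp only [prod_const_one, one_mul] at h
  exact_mod_cast h.symm

theorem maximalMinor_ne_zero {U : Matrix (Fin M) ι ℂ} (hU : U * Uᴴ = 1) : maximalMinor U ≠ 0 := by
  intro h
  simpa [h] using sum_normSq_maximalMinor hU

end MaximalMinors

section Purity

open Finset

variable {ι : Type*} [Fintype ι] [DecidableEq ι]

theorem sum_powerset_sum_powerset_compl {β : Type*} [AddCommMonoid β] (A : Finset ι)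
    (f : Finset ι → β) :
    ∑ SA ∈ A.powerset, ∑ SB ∈ Aᶜ.powerset, f (SA ∪ SB) = ∑ S, f S := by
  rw [← sum_product' A.powerset Aᶜ.powerset fun SA SB ↦ f (SA ∪ SB)]
  refine sum_nbij' (fun p ↦ p.1 ∪ p.2) (fun S ↦ (S ∩ A, S ∩ Aᶜ)) (by simp) (by simp) ?_ ?_ (by simp)
  · rintro ⟨SA, SB⟩ h
    simp only [mem_product, mem_powerset] at h
    have hSB : Disjoint SB A := subset_compl_iff_disjoint_right.1 h.2
    have hSA : Disjoint SA Aᶜ := disjoint_compl_right.mono_left h.1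
    simp [union_inter_distrib_right, inter_eq_left.2 h.1, inter_eq_left.2 h.2,
      disjoint_iff_inter_eq_empty.1 hSA, disjoint_iff_inter_eq_empty.1 hSB]
  · simp [← inter_union_distrib_left]

/-- The reduced density matrix `ρ_A` of the fermionic state with occupation amplitudes `ψ`, indexed
by the occupied subsets of the region `A`. -/
def reducedDensity (A : Finset ι) (ψ : Finset ι → ℂ) (SA SA' : Finset ι) : ℂ :=
  ∑ SB ∈ Aᶜ.powerset, ψ (SA ∪ SB) * starRingEnd ℂ (ψ (SA' ∪ SB))

/-- The purity `Tr ρ_A²`, as the squared Hilbert–Schmidt norm of the Hermitian matrix `ρ_A`. -/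
def purity (A : Finset ι) (ψ : Finset ι → ℂ) : ℝ :=
  ∑ SA ∈ A.powerset, ∑ SA' ∈ A.powerset, normSq (reducedDensity A ψ SA SA')

/-- The probability of finding exactly the sites `SA` of the region `A` occupied. -/
def marginalWeight (A : Finset ι) (ψ : Finset ι → ℂ) (SA : Finset ι) : ℝ :=
  ∑ SB ∈ Aᶜ.powerset, normSq (ψ (SA ∪ SB))

/-- The expectation of the parity `(-1)^(N_A)` of the particle number in the region `A`. -/
def parityExpectation (A : Finset ι) (ψ : Finset ι → ℂ) : ℝ :=
  ∑ S, (-1) ^ #(S ∩ A) * normSq (ψ S)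

variable (A : Finset ι) (ψ : Finset ι → ℂ)

theorem sum_marginalWeight : ∑ SA ∈ A.powerset, marginalWeight A ψ SA = ∑ S, normSq (ψ S) :=
  sum_powerset_sum_powerset_compl A fun S ↦ normSq (ψ S)

theorem sum_neg_one_pow_card_mul_marginalWeight :
    ∑ SA ∈ A.powerset, (-1) ^ #SA * marginalWeight A ψ SA = parityExpectation A ψ := by
  rw [parityExpectation, ← sum_powerset_sum_powerset_compl A]
  refine sum_congr rfl fun SA hSA ↦ ?_
  rw [marginalWeight, mul_sum]
  refine sum_congr rfl fun SB hSB ↦ ?_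
  have hdisj : Disjoint SB A := subset_compl_iff_disjoint_right.1 (mem_powerset.1 hSB)
  rw [union_inter_distrib_right, inter_eq_left.2 (mem_powerset.1 hSA),
    disjoint_iff_inter_eq_empty.1 hdisj, union_empty]

theorem reducedDensity_self (SA : Finset ι) :
    reducedDensity A ψ SA SA = marginalWeight A ψ SA := by
  simp [reducedDensity, marginalWeight, mul_conj]

theorem normSq_reducedDensity_le (SA SA' : Finset ι) :
    normSq (reducedDensity A ψ SA SA') ≤ marginalWeight A ψ SA * marginalWeight A ψ SA' := by
  simp only [normSq_eq_norm_sq, marginalWeight]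
  calc ‖reducedDensity A ψ SA SA'‖ ^ 2
      ≤ (∑ SB ∈ Aᶜ.powerset, ‖ψ (SA ∪ SB)‖ * ‖ψ (SA' ∪ SB)‖) ^ 2 := by
        gcongr
        refine (norm_sum_le _ _).trans_eq (sum_congr rfl fun SB _ ↦ ?_)
        rw [norm_mul, RCLike.norm_conj]
    _ ≤ _ := sum_mul_sq_le_sq_mul_sq _ _ _

variable {A ψ}

theorem reducedDensity_eq_zero_of_parity_ne {ε : ℝ} (hψ : ∀ S, ψ S ≠ 0 → (-1) ^ #S = ε)
    {SA SA' : Finset ι} (hSA : SA ⊆ A) (hSA' : SA' ⊆ A) (h : (-1 : ℝ) ^ #SA ≠ (-1) ^ #SA') :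
    reducedDensity A ψ SA SA' = 0 := by
  refine sum_eq_zero fun SB hSB ↦ by_contra fun hne ↦ h ?_
  have hSB' : Disjoint A SB := subset_compl_iff_disjoint_left.1 (mem_powerset.1 hSB)
  have hsign := (hψ _ (left_ne_zero_of_mul hne)).trans
    (hψ _ ((map_ne_zero _).1 (right_ne_zero_of_mul hne))).symm
  rw [card_union_of_disjoint (hSB'.mono_left hSA), card_union_of_disjoint (hSB'.mono_left hSA'),
    pow_add, pow_add] at hsign
  exact mul_right_cancel₀ (pow_ne_zero _ (by norm_num)) hsign

-- Since `ρ_A` is block diagonal with respect to the parity of `N_A`, the Cauchy–Schwarz bound may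
-- be multiplied by the indicator `(1 + (-1)^#SA * (-1)^#SA') / 2` of equal parities.
theorem purity_le_of_parity_eq {ε : ℝ} (hψ : ∀ S, ψ S ≠ 0 → (-1) ^ #S = ε) :
    purity A ψ ≤ ((∑ S, normSq (ψ S)) ^ 2 + parityExpectation A ψ ^ 2) / 2 := by
  set w := marginalWeight A ψ
  have hentry : ∀ SA ∈ A.powerset, ∀ SA' ∈ A.powerset, normSq (reducedDensity A ψ SA SA') ≤
      (w SA * w SA' + ((-1) ^ #SA * w SA) * ((-1) ^ #SA' * w SA')) / 2 := by
    intro SA hSA SA' hSA'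
    by_cases h : (-1 : ℝ) ^ #SA = (-1) ^ #SA'
    · have hsq : ((-1 : ℝ) ^ #SA') ^ 2 = 1 := by rw [← pow_mul, mul_comm, pow_mul]; simp
      refine (normSq_reducedDensity_le A ψ SA SA').trans_eq ?_
      rw [h]
      linear_combination (-w SA * w SA' / 2) * hsq
    · have hopp : (-1 : ℝ) ^ #SA * (-1) ^ #SA' = -1 := by
        rcases neg_one_pow_eq_or ℝ #SA with h₁ | h₁ <;>
          rcases neg_one_pow_eq_or ℝ #SA' with h₂ | h₂ <;> simp_all
      rw [reducedDensity_eq_zero_of_parity_ne hψ (mem_powerset.1 hSA) (mem_powerset.1 hSA') h,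
        map_zero]
      exact le_of_eq (by linear_combination (-w SA * w SA' / 2) * hopp)
  calc purity A ψ
      ≤ ∑ SA ∈ A.powerset, ∑ SA' ∈ A.powerset,
          (w SA * w SA' + ((-1) ^ #SA * w SA) * ((-1) ^ #SA' * w SA')) / 2 :=
        sum_le_sum fun SA hSA ↦ sum_le_sum fun SA' hSA' ↦ hentry SA hSA SA' hSA'
    _ = _ := by
        simp only [← sum_div, sum_add_distrib, ← mul_sum, ← sum_mul]
        rw [sum_marginalWeight, sum_neg_one_pow_card_mul_marginalWeight, sq, sq]

theorem purity_pos (hψ : ψ ≠ 0) : 0 < purity A ψ := by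
  obtain ⟨S, hS⟩ := Function.ne_iff.1 hψ
  have hw : 0 < ∑ SA ∈ A.powerset, marginalWeight A ψ SA := by
    rw [sum_marginalWeight]
    exact sum_pos' (fun _ _ ↦ normSq_nonneg _) ⟨S, mem_univ S, normSq_pos.2 hS⟩
  obtain ⟨SA, hSA, hne⟩ := exists_ne_zero_of_sum_ne_zero hw.ne'
  have hentry : 0 < normSq (reducedDensity A ψ SA SA) := by
    rw [reducedDensity_self, normSq_pos]
    exact_mod_cast hne
  refine sum_pos' (fun _ _ ↦ sum_nonneg fun _ _ ↦ normSq_nonneg _) ⟨SA, hSA, ?_⟩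
  exact sum_pos' (fun _ _ ↦ normSq_nonneg _) ⟨SA, hSA, hentry⟩

end Purity

section DetBound

open Matrix
open scoped ComplexOrder

variable {κ : Type*} [Fintype κ] [DecidableEq κ]

theorem posSemidef_re_det_le_exp {B : Matrix κ κ ℂ} (hB : B.PosSemidef) :
    B.det.re ≤ Real.exp (B.trace.re - Fintype.card κ) := by
  have hdet : B.det.re = ∏ i, hB.isHermitian.eigenvalues i := by
    rw [hB.isHermitian.det_eq_prod_eigenvalues]
    exact mod_cast ofReal_re _
  have htrace : B.trace.re = ∑ i, hB.isHermitian.eigenvalues i := by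
    rw [hB.isHermitian.trace_eq_sum_eigenvalues]
    exact mod_cast ofReal_re _
  calc B.det.re
      = ∏ i, hB.isHermitian.eigenvalues i := hdet
    _ ≤ ∏ i, Real.exp (hB.isHermitian.eigenvalues i - 1) := by
        refine Finset.prod_le_prod (fun i _ ↦ hB.eigenvalues_nonneg i) fun i _ ↦ ?_
        linarith [Real.add_one_le_exp (hB.isHermitian.eigenvalues i - 1)]
    _ = Real.exp (B.trace.re - Fintype.card κ) := by
        rw [← Real.exp_sum, Finset.sum_sub_distrib, ← htrace]
        simp

theorem normSq_det_le_exp (H : Matrix κ κ ℂ) :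
    normSq H.det ≤ Real.exp ((Hᴴ * H).trace.re - Fintype.card κ) := by
  refine le_of_eq_of_le ?_ (posSemidef_re_det_le_exp (posSemidef_conjTranspose_mul_self H))
  rw [det_mul, det_conjTranspose, RCLike.star_def, ← normSq_eq_conj_mul_self, ofReal_re]

end DetBound

section NumberVariance

open Finset Matrix

variable {ι : Type*} [Fintype ι]

theorem sum_normSq_row_eq_re_diag {C : Matrix ι ι ℂ} (hC : IsStarProjection C) (x : ι) :
    ∑ y, normSq (C x y) = (C x x).re := by
  have hxx : (C * Cᴴ) x x = C x x := by
    rw [← star_eq_conjTranspose, hC.isSelfAdjoint.star_eq, hC.isIdempotentElem]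
  have hsum : ((∑ y, normSq (C x y) : ℝ) : ℂ) = C x x := by
    simp [← hxx, mul_apply, mul_conj]
  rw [← hsum, ofReal_re]

theorem normSq_apply_le_re_diag_mul_re_diag {C : Matrix ι ι ℂ} (hC : IsStarProjection C) (x y : ι) :
    normSq (C x y) ≤ (C x x).re * (C y y).re := by
  have hxy : C x y = ∑ z, C x z * starRingEnd ℂ (C y z) := by
    calc C x y = (C * Cᴴ) x y := by
          rw [← star_eq_conjTranspose, hC.isSelfAdjoint.star_eq, hC.isIdempotentElem]
      _ = _ := mul_apply
  rw [← sum_normSq_row_eq_re_diag hC, ← sum_normSq_row_eq_re_diag hC]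
  simp only [normSq_eq_norm_sq]
  calc ‖C x y‖ ^ 2 ≤ (∑ z, ‖C x z‖ * ‖C y z‖) ^ 2 := by
        rw [hxy]
        gcongr
        refine (norm_sum_le _ _).trans_eq (sum_congr rfl fun z _ ↦ ?_)
        rw [norm_mul, RCLike.norm_conj]
    _ ≤ _ := sum_mul_sq_le_sq_mul_sq _ _ _

variable [DecidableEq ι]

/-- The squared Hilbert–Schmidt norm of the block of `C` connecting the region `A` to its
complement. If the projection `C` is the correlation matrix of a free-fermion state, this is the
variance of the particle number in `A`. -/
def numberVariance (A : Finset ι) (C : Matrix ι ι ℂ) : ℝ :=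
  ∑ x ∈ A, ∑ y ∈ Aᶜ, normSq (C x y)

theorem numberVariance_one_sub (A : Finset ι) (C : Matrix ι ι ℂ) :
    numberVariance A (1 - C) = numberVariance A C := by
  refine sum_congr rfl fun x hx ↦ sum_congr rfl fun y hy ↦ ?_
  have hxy : x ≠ y := fun h ↦ mem_compl.1 hy (h ▸ hx)
  simp [one_apply_ne hxy]

theorem sub_sq_le_numberVariance {C : Matrix ι ι ℂ} (hC : IsStarProjection C) (A : Finset ι) :
    ∑ x ∈ A, (C x x).re - (∑ x ∈ A, (C x x).re) ^ 2 ≤ numberVariance A C := by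
  have hsplit : ∑ x ∈ A, (C x x).re =
      ∑ x ∈ A, ∑ y ∈ A, normSq (C x y) + numberVariance A C := by
    rw [numberVariance, ← sum_add_distrib]
    refine sum_congr rfl fun x _ ↦ ?_
    rw [sum_add_sum_compl, sum_normSq_row_eq_re_diag hC]
  have hinner : ∑ x ∈ A, ∑ y ∈ A, normSq (C x y) ≤ (∑ x ∈ A, (C x x).re) ^ 2 := by
    rw [sq, sum_mul_sum]
    exact sum_le_sum fun x _ ↦ sum_le_sum fun y _ ↦ normSq_apply_le_re_diag_mul_re_diag hC x y
  linarith

end NumberVariance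

section RegionSign

open Finset Matrix

variable {ι : Type*} [DecidableEq ι]

/-- The operator `(-1)^(N_A)` on one-particle states: `-1` on the region `A` and `1` elsewhere. -/
def regionSign (A : Finset ι) (x : ι) : ℂ := if x ∈ A then -1 else 1

theorem prod_regionSign (A S : Finset ι) : ∏ x ∈ S, regionSign A x = (-1) ^ #(S ∩ A) := by
  simp [regionSign]

variable [Fintype ι]

theorem sum_sum_regionSign_mul (A : Finset ι) {W : ι → ι → ℂ} (hW : ∀ x y, W x y = W y x) :
    ∑ x, ∑ y, regionSign A x * regionSign A y * W x y =
      ∑ x, ∑ y, W x y - 4 * ∑ x ∈ A, ∑ y ∈ Aᶜ, W x y := by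
  have hsplit (F : ι → ι → ℂ) : ∑ x, ∑ y, F x y =
      (∑ x ∈ A, ∑ y ∈ A, F x y + ∑ x ∈ A, ∑ y ∈ Aᶜ, F x y) +
        (∑ x ∈ Aᶜ, ∑ y ∈ A, F x y + ∑ x ∈ Aᶜ, ∑ y ∈ Aᶜ, F x y) := by
    simp only [← sum_add_distrib, sum_add_sum_compl]
  have hin {x : ι} (hx : x ∈ A) : regionSign A x = -1 := if_pos hx
  have hout {x : ι} (hx : x ∈ Aᶜ) : regionSign A x = 1 := if_neg (mem_compl.1 hx)
  have hcross : ∑ x ∈ Aᶜ, ∑ y ∈ A, W x y = ∑ x ∈ A, ∑ y ∈ Aᶜ, W x y := by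
    rw [sum_comm]
    simp only [hW]
  rw [hsplit, hsplit W, hcross]
  simp +contextual only [hin, hout, neg_mul, mul_neg, one_mul, neg_neg, sum_neg_distrib]
  rw [hcross]
  ring

theorem trace_mul_diagonal_regionSign_sq {C : Matrix ι ι ℂ} (hC : IsStarProjection C)
    (A : Finset ι) :
    (C * diagonal (regionSign A) * (C * diagonal (regionSign A))).trace =
      C.trace - 4 * numberVariance A C := by
  have hconj (x y : ι) : C y x = starRingEnd ℂ (C x y) :=
    (IsHermitian.apply hC.isSelfAdjoint y x).symm
  have htrace : C.trace = ∑ x, ∑ y, (normSq (C x y) : ℂ) := by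
    refine sum_congr rfl fun x _ ↦ ?_
    rw [diag_apply, ← ofReal_sum, sum_normSq_row_eq_re_diag hC]
    exact (conj_eq_iff_re.1 (hconj x x).symm).symm
  calc _ = ∑ x, ∑ y, regionSign A x * regionSign A y * normSq (C x y) := by
        simp only [trace, diag_apply, mul_apply (M := C * _), mul_diagonal]
        refine sum_congr rfl fun x _ ↦ sum_congr rfl fun y _ ↦ ?_
        rw [hconj x y, ← mul_conj]
        ring
    _ = _ := by
        rw [sum_sum_regionSign_mul, htrace, numberVariance]
        · push_cast; rfl
        · intro x y
          rw [hconj x y, normSq_conj]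

end RegionSign

section GaussianBound

open Finset Matrix

variable {ι : Type*} [Fintype ι] {M : ℕ} {U : Matrix (Fin M) ι ℂ}

theorem isStarProjection_conjTranspose_mul_self (hU : U * Uᴴ = 1) : IsStarProjection (Uᴴ * U) where
  isIdempotentElem := by
    rw [IsIdempotentElem, Matrix.mul_assoc, ← Matrix.mul_assoc U, hU, Matrix.one_mul]
  isSelfAdjoint := isHermitian_conjTranspose_mul_self U

theorem ofReal_parityExpectation_maximalMinor [LinearOrder ι] (A : Finset ι) :
    (parityExpectation A (maximalMinor U) : ℂ) = (U * diagonal (regionSign A) * Uᴴ).det := by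
  simp [det_mul_diagonal_mul_conjTranspose, prod_regionSign, parityExpectation]

theorem parityExpectation_maximalMinor_sq_le [LinearOrder ι] (hU : U * Uᴴ = 1) (A : Finset ι) :
    parityExpectation A (maximalMinor U) ^ 2 ≤ Real.exp (-4 * numberVariance A (Uᴴ * U)) := by
  set D := diagonal (regionSign A) with hD
  have hDstar : Dᴴ = D := by
    rw [hD, diagonal_conjTranspose]
    congr 1
    ext x
    by_cases hx : x ∈ A <;> simp [regionSign, hx]
  have htrace : ((U * D * Uᴴ)ᴴ * (U * D * Uᴴ)).trace = M - 4 * numberVariance A (Uᴴ * U) := by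
    calc _ = (Uᴴ * U * D * (Uᴴ * U * D)).trace := by
          rw [conjTranspose_mul, conjTranspose_mul, conjTranspose_conjTranspose, hDstar]
          simpa only [Matrix.mul_assoc] using trace_mul_comm (U * D) (Uᴴ * U * D * Uᴴ)
      _ = _ := by
          rw [trace_mul_diagonal_regionSign_sq (isStarProjection_conjTranspose_mul_self hU),
            trace_mul_comm, hU, trace_one, Fintype.card_fin]
  have h := normSq_det_le_exp (U * D * Uᴴ)
  rw [← ofReal_parityExpectation_maximalMinor, normSq_ofReal, htrace, Fintype.card_fin] at h
  convert h using 2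
  · ring
  · simp

theorem purity_maximalMinor_le [LinearOrder ι] (hU : U * Uᴴ = 1) (A : Finset ι) :
    purity A (maximalMinor U) ≤ (1 + Real.exp (-4 * numberVariance A (Uᴴ * U))) / 2 := by
  have hparity (S : Finset ι) (hS : maximalMinor U S ≠ 0) : (-1 : ℝ) ^ #S = (-1) ^ M := by
    rw [of_not_not (mt (maximalMinor_of_card_ne U) hS)]
  calc purity A (maximalMinor U)
      ≤ (1 ^ 2 + parityExpectation A (maximalMinor U) ^ 2) / 2 := by
        rw [← sum_normSq_maximalMinor hU]
        exact purity_le_of_parity_eq hparity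
    _ ≤ _ := by
        rw [one_pow]
        gcongr
        exact parityExpectation_maximalMinor_sq_le hU A

end GaussianBound

section Interval

open Finset Matrix

theorem sum_range_sum_Ico_le_succ {n L : ℕ} (hL : 2 * L + 1 ≤ n) {g : ℕ → ℝ} (hg : ∀ d, 0 ≤ g d) :
    ∑ x ∈ range L, ∑ y ∈ Ico L n, g (y - x) ≤
      ∑ x ∈ range (L + 1), ∑ y ∈ Ico (L + 1) n, g (y - x) := by
  have hlost : ∑ x ∈ range L, g (L - x) = ∑ d ∈ range L, g (d + 1) := by
    rw [← sum_range_reflect]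
    refine sum_congr rfl fun x hx ↦ congrArg g ?_
    have := mem_range.1 hx
    omega
  have hgained : ∑ y ∈ Ico (L + 1) n, g (y - L) = ∑ d ∈ range (n - (L + 1)), g (d + 1) := by
    rw [sum_Ico_eq_sum_range]
    exact sum_congr rfl fun d _ ↦ congrArg g (by omega)
  have hle : ∑ d ∈ range L, g (d + 1) ≤ ∑ d ∈ range (n - (L + 1)), g (d + 1) :=
    sum_le_sum_of_subset_of_nonneg (range_mono (by omega)) fun d _ _ ↦ hg _
  simp only [sum_eq_sum_Ico_succ_bot (show L < n by omega), sum_add_distrib, sum_range_succ]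
  linarith

theorem sum_range_sum_Ico_mono {n L ℓ : ℕ} (hL : L ≤ ℓ) (hℓ : 2 * ℓ ≤ n) {g : ℕ → ℝ}
    (hg : ∀ d, 0 ≤ g d) :
    ∑ x ∈ range L, ∑ y ∈ Ico L n, g (y - x) ≤ ∑ x ∈ range ℓ, ∑ y ∈ Ico ℓ n, g (y - x) := by
  induction ℓ, hL using Nat.le_induction with
  | base => rfl
  | succ ℓ _ ih => exact (ih (by omega)).trans (sum_range_sum_Ico_le_succ (by omega) hg)

theorem sum_filter_val_lt {β : Type*} [AddCommMonoid β] {n L : ℕ} (hL : L ≤ n) (F : ℕ → β) :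
    ∑ x : Fin n with x.val < L, F x = ∑ x ∈ range L, F x := by
  rw [sum_filter, Fin.sum_univ_eq_sum_range fun x ↦ if x < L then F x else 0, ← sum_filter]
  congr 1
  ext x
  simp only [mem_filter, mem_range]
  omega

theorem sum_compl_filter_val_lt {β : Type*} [AddCommMonoid β] (n L : ℕ) (F : ℕ → β) :
    ∑ x ∈ ({x : Fin n | x.val < L} : Finset (Fin n))ᶜ, F x = ∑ x ∈ Ico L n, F x := by
  rw [compl_filter, sum_filter, Fin.sum_univ_eq_sum_range fun x ↦ if ¬x < L then F x else 0,
    ← sum_filter]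
  congr 1
  ext x
  simp only [mem_filter, mem_range, mem_Ico]
  omega

theorem exists_le_min_mul_le_mul_le {s : ℝ} (hs₀ : 0 < s) (hs : s ≤ 1 / 2) (ℓ : ℕ) :
    ∃ L ≤ ℓ, min (ℓ * s) (1 / 4) ≤ L * s ∧ L * s ≤ 3 / 4 := by
  set N := ⌈1 / (4 * s)⌉₊
  have hquarter : 1 / (4 * s) * s = 1 / 4 := by field_simp
  have hlower : 1 / 4 ≤ N * s := by
    rw [← hquarter]
    gcongr
    exact Nat.le_ceil _
  have hupper : N * s ≤ 3 / 4 := by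
    calc N * s ≤ (1 / (4 * s) + 1) * s := by
          gcongr
          exact (Nat.ceil_lt_add_one (by positivity)).le
      _ ≤ 3 / 4 := by linarith
  rcases le_total ℓ N with h | h
  · refine ⟨ℓ, le_rfl, min_le_left _ _, le_trans ?_ hupper⟩
    gcongr
  · exact ⟨N, h, (min_le_right _ _).trans hlower, hupper⟩

theorem three_fourths_mul_sq_le_sub_sq {r u : ℝ} (hr₀ : 0 ≤ r) (hr : r ≤ 1 / 2)
    (hlower : min r (1 / 4) ≤ u) (hupper : u ≤ 3 / 4) : 3 / 4 * r ^ 2 ≤ u - u ^ 2 := by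
  rcases min_le_iff.1 hlower with h | h
  · nlinarith
  · have hparabola : 3 / 16 ≤ u - u ^ 2 := by nlinarith
    nlinarith

variable {n : ℕ} {C : Matrix (Fin n) (Fin n) ℂ} {f : ℕ → ℂ}

theorem numberVariance_filter_val_lt (hf : ∀ x y : Fin n, x < y → C x y = f (y - x)) {L : ℕ}
    (hL : L ≤ n) :
    numberVariance {x | x.val < L} C =
      ∑ x ∈ range L, ∑ y ∈ Ico L n, normSq (f (y - x)) := by
  rw [← sum_filter_val_lt hL]
  refine sum_congr rfl fun x hx ↦ ?_
  rw [← sum_compl_filter_val_lt]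
  refine sum_congr rfl fun y hy ↦ ?_
  simp only [mem_compl, mem_filter_univ, not_lt] at hx hy
  rw [hf x y (Fin.lt_def.2 (hx.trans_le hy))]

theorem numberVariance_filter_val_lt_mono (hf : ∀ x y : Fin n, x < y → C x y = f (y - x))
    {L ℓ : ℕ} (hL : L ≤ ℓ) (hℓ : 2 * ℓ ≤ n) :
    numberVariance {x | x.val < L} C ≤ numberVariance {x | x.val < ℓ} C := by
  rw [numberVariance_filter_val_lt hf (by omega), numberVariance_filter_val_lt hf (by omega)]
  exact sum_range_sum_Ico_mono hL hℓ fun _ ↦ normSq_nonneg _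

theorem three_fourths_mul_sq_le_numberVariance_of_le_half (hC : IsStarProjection C)
    (hf : ∀ x y : Fin n, x < y → C x y = f (y - x)) {s : ℝ} (hdiag : ∀ x, (C x x).re = s)
    (hns : 1 ≤ n * s) (hs : s ≤ 1 / 2) {ℓ : ℕ} (hℓ : 2 * ℓ ≤ n) :
    3 / 4 * (ℓ / n : ℝ) ^ 2 ≤ numberVariance {x | x.val < ℓ} C := by
  have hn₀ : (0 : ℝ) < n := Nat.cast_pos.2 <| Nat.pos_of_ne_zero fun h ↦ by
    norm_num [h] at hns
  have hs₀ : 0 < s := pos_of_mul_pos_right (one_pos.trans_le hns) hn₀.le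
  obtain ⟨L, hLℓ, hlower, hupper⟩ := exists_le_min_mul_le_mul_le hs₀ hs ℓ
  have hL : L * s - (L * s) ^ 2 ≤ numberVariance {x | x.val < ℓ} C := by
    refine le_trans ?_ (numberVariance_filter_val_lt_mono hf hLℓ hℓ)
    have h := sub_sq_le_numberVariance hC {x : Fin n | x.val < L}
    simpa [hdiag, Fin.card_filter_val_lt, min_eq_right (show L ≤ n by omega)] using h
  have hr₀ : 0 ≤ (ℓ / n : ℝ) := by positivity
  have hr : (ℓ / n : ℝ) ≤ 1 / 2 := by
    rw [div_le_div_iff₀ hn₀ two_pos]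
    exact_mod_cast (by omega : ℓ * 2 ≤ 1 * n)
  have hrs : (ℓ / n : ℝ) ≤ ℓ * s := by
    rw [div_le_iff₀ hn₀]
    nlinarith [(Nat.cast_nonneg ℓ : (0 : ℝ) ≤ ℓ)]
  refine (three_fourths_mul_sq_le_sub_sq hr₀ hr ?_ hupper).trans hL
  exact (min_le_min_right _ hrs).trans hlower

theorem three_fourths_mul_sq_le_numberVariance (hC : IsStarProjection C)
    (hf : ∀ x y : Fin n, x < y → C x y = f (y - x)) {s : ℝ} (hdiag : ∀ x, (C x x).re = s)
    (hns : 1 ≤ n * s) (hns' : 1 ≤ n * (1 - s)) {ℓ : ℕ} (hℓ : 2 * ℓ ≤ n) :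
    3 / 4 * (ℓ / n : ℝ) ^ 2 ≤ numberVariance {x | x.val < ℓ} C := by
  rcases le_total s (1 / 2) with hs | hs
  · exact three_fourths_mul_sq_le_numberVariance_of_le_half hC hf hdiag hns hs hℓ
  · have hf' (x y : Fin n) (hxy : x < y) : (1 - C) x y = (-f) (y - x) := by
      simp [one_apply_ne hxy.ne, hf x y hxy]
    rw [← numberVariance_one_sub]
    exact three_fourths_mul_sq_le_numberVariance_of_le_half hC.one_sub hf'
      (fun x ↦ by simp [hdiag]) hns' (by linarith) hℓ

end Interval

section PlaneWaves

open Finset Matrix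

variable {M : ℕ}

/-- The normalized plane waves `t ↦ z_j ^ t / √n` on a ring of `n` sites, as the rows of a matrix.
They satisfy a common twisted boundary condition when all `z_j ^ n` agree. -/
def planeWave (n : ℕ) (z : Fin M → Circle) : Matrix (Fin M) (Fin n) ℂ :=
  (√n : ℂ)⁻¹ • of fun j (t : Fin n) ↦ (z j : ℂ) ^ (t : ℕ)

variable {n : ℕ} {z : Fin M → Circle}

theorem planeWave_apply (j : Fin M) (t : Fin n) :
    planeWave n z j t = (√n : ℂ)⁻¹ * (z j : ℂ) ^ (t : ℕ) :=
  rfl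

theorem conj_planeWave_mul_planeWave (i j : Fin M) (s t : Fin n) :
    starRingEnd ℂ (planeWave n z i s) * planeWave n z j t =
      (n : ℂ)⁻¹ * (((z i : ℂ) ^ (s : ℕ))⁻¹ * (z j : ℂ) ^ (t : ℕ)) := by
  have hsqrt : (√n : ℂ)⁻¹ * (√n : ℂ)⁻¹ = (n : ℂ)⁻¹ := by
    rw [← mul_inv, ← ofReal_mul, Real.mul_self_sqrt n.cast_nonneg, ofReal_natCast]
  have hconj : starRingEnd ℂ (planeWave n z i s) = (√n : ℂ)⁻¹ * ((z i : ℂ) ^ (s : ℕ))⁻¹ := by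
    rw [planeWave_apply, map_mul, map_inv₀, conj_ofReal, ← Circle.coe_pow,
      ← Circle.coe_inv_eq_conj, Circle.coe_inv]
  rw [hconj, planeWave_apply, ← hsqrt]
  ring

theorem sum_inv_pow_mul_pow_eq_zero {K : Type*} [Field K] {a b : K} (hb : b ≠ 0) (hab : a ≠ b)
    (h : a ^ n = b ^ n) : ∑ t : Fin n, (b ^ (t : ℕ))⁻¹ * a ^ (t : ℕ) = 0 := by
  have hne : a / b ≠ 1 := fun h ↦ hab ((div_eq_one_iff_eq hb).1 h)
  simp only [mul_comm _ (a ^ _), ← div_eq_mul_inv, ← div_pow]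
  rw [Fin.sum_univ_eq_sum_range, geom_sum_eq hne, div_pow, h, div_self (pow_ne_zero n hb),
    sub_self, zero_div]

theorem planeWave_mul_conjTranspose (hn : n ≠ 0) (hz : z.Injective)
    (hzn : ∀ i j, z i ^ n = z j ^ n) : planeWave n z * (planeWave n z)ᴴ = 1 := by
  ext i j
  have hentry : (planeWave n z * (planeWave n z)ᴴ) i j =
      (n : ℂ)⁻¹ * ∑ t : Fin n, ((z j : ℂ) ^ (t : ℕ))⁻¹ * (z i : ℂ) ^ (t : ℕ) := by
    simp only [mul_apply, conjTranspose_apply, mul_sum, ← conj_planeWave_mul_planeWave]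
    exact sum_congr rfl fun t _ ↦ mul_comm _ _
  rw [hentry]
  rcases eq_or_ne i j with rfl | hij
  · simp [hn]
  · have hzij : (z i : ℂ) ≠ z j := fun h ↦ hij (hz (Circle.coe_injective h))
    have hpow : (z i : ℂ) ^ n = (z j : ℂ) ^ n := mod_cast congrArg ((↑) : Circle → ℂ) (hzn i j)
    rw [sum_inv_pow_mul_pow_eq_zero (z j).coe_ne_zero hzij hpow, mul_zero, one_apply_ne hij]

theorem conjTranspose_planeWave_mul_apply {x y : Fin n} (hxy : x ≤ y) :
    ((planeWave n z)ᴴ * planeWave n z) x y = (n : ℂ)⁻¹ * ∑ j, (z j : ℂ) ^ (y - x : ℕ) := by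
  simp only [mul_apply, conjTranspose_apply, RCLike.star_def, conj_planeWave_mul_planeWave, mul_sum]
  refine sum_congr rfl fun j _ ↦ ?_
  rw [pow_sub₀ _ (z j).coe_ne_zero (Fin.le_def.1 hxy), mul_comm (_ ^ _)]

theorem re_conjTranspose_planeWave_mul_apply_self (x : Fin n) :
    (((planeWave n z)ᴴ * planeWave n z) x x).re = M / n := by
  rw [conjTranspose_planeWave_mul_apply le_rfl, ← ofReal_natCast, ← ofReal_inv]
  simp [-ofReal_inv, div_eq_inv_mul]

theorem slater_eq_maximalMinor (k : Fin M → ℝ) (φ : ℝ) :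
    slater n M k φ = maximalMinor (planeWave n fun j ↦ Circle.exp (k j - φ / n)) := by
  ext S
  rw [planeWave, maximalMinor_smul]
  by_cases h : #S = M
  · rw [slater, dif_pos h, maximalMinor_of_card_eq _ h]
    congr 1
    · rw [← ofReal_inv, ← ofReal_pow, Real.sqrt_eq_rpow, ← Real.rpow_neg n.cast_nonneg,
        ← Real.rpow_mul_natCast n.cast_nonneg]
      congr 2
      ring
    · congr 1
      ext j l
      simp only [of_apply, submatrix_apply, id, coe_orderIsoOfFin_apply, Circle.coe_exp]
      rw [← Complex.exp_nat_mul]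
      congr 1
      push_cast
      ring
  · rw [slater, dif_neg h, maximalMinor_of_card_ne _ h, mul_zero]

theorem momentum_mem_Ico {m : ℕ} (hm : m < n) :
    2 * Real.pi * m / n ∈ Set.Ico 0 (2 * Real.pi) := by
  have hn : (0 : ℝ) < n := mod_cast m.zero_le.trans_lt hm
  refine ⟨by positivity, ?_⟩
  rw [div_lt_iff₀ hn]
  gcongr

theorem injective_circleExp_sub {ι : Type*} {k : ι → ℝ} (hkinj : k.Injective)
    (hk : ∀ j, k j ∈ Set.Ico 0 (2 * Real.pi)) (θ : ℝ) :
    Function.Injective fun j ↦ Circle.exp (k j - θ) := by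
  intro i j hij
  simp only [Circle.exp_sub, div_left_inj] at hij
  exact hkinj (Circle.exp_injOn_Ico (by simp) (hk i) (hk j) hij)

theorem circleExp_momentum_sub_pow (hn : n ≠ 0) (m : ℕ) (φ : ℝ) :
    Circle.exp (2 * Real.pi * m / n - φ / n) ^ n = Circle.exp (-φ) := by
  have hn' : (n : ℝ) ≠ 0 := mod_cast hn
  rw [← Circle.exp_natCast_mul, Circle.exp_eq_exp]
  refine ⟨m, ?_⟩
  rw [Int.cast_natCast]
  field_simp
  ring

theorem planeWave_momentum_mul_conjTranspose (hn : n ≠ 0) (φ : ℝ) {k : Fin M → ℝ}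
    (hkinj : Function.Injective k) (hk : ∀ j, ∃ m : ℕ, m < n ∧ k j = 2 * Real.pi * m / n) :
    planeWave n (fun j ↦ Circle.exp (k j - φ / n)) *
      (planeWave n fun j ↦ Circle.exp (k j - φ / n))ᴴ = 1 := by
  choose m hm hkm using hk
  have hmem (j : Fin M) : k j ∈ Set.Ico 0 (2 * Real.pi) := hkm j ▸ momentum_mem_Ico (hm j)
  refine planeWave_mul_conjTranspose hn (injective_circleExp_sub hkinj hmem _) fun i j ↦ ?_
  rw [hkm i, hkm j, circleExp_momentum_sub_pow hn, circleExp_momentum_sub_pow hn]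

end PlaneWaves

section RenyiBound

theorem one_add_exp_neg_div_two_le_exp (v : ℝ) :
    (1 + Real.exp (-4 * v)) / 2 ≤ Real.exp (-2 * v + 2 * v ^ 2) := by
  have hsplit : Real.exp (-4 * v) = Real.exp (-2 * v) * Real.exp (-(2 * v)) := by
    rw [← Real.exp_add]
    ring_nf
  have hcancel : Real.exp (-2 * v) * Real.exp (2 * v) = 1 := by
    rw [← Real.exp_add]
    simp
  calc (1 + Real.exp (-4 * v)) / 2 = Real.exp (-2 * v) * Real.cosh (2 * v) := by
        rw [Real.cosh_eq, hsplit, ← hcancel]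
        ring
    _ ≤ Real.exp (-2 * v) * Real.exp ((2 * v) ^ 2 / 2) := by
        gcongr
        exact Real.cosh_le_exp_half_sq _
    _ = Real.exp (-2 * v + 2 * v ^ 2) := by
        rw [← Real.exp_add]
        ring_nf

theorem one_add_exp_neg_div_two_le_exp_neg_sq {r v : ℝ} (hr : r ^ 2 ≤ 1 / 4)
    (hv : 3 / 4 * r ^ 2 ≤ v) : (1 + Real.exp (-4 * v)) / 2 ≤ Real.exp (-r ^ 2) := by
  calc (1 + Real.exp (-4 * v)) / 2
      ≤ (1 + Real.exp (-4 * (3 / 4 * r ^ 2))) / 2 := by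
        gcongr (1 + Real.exp ?_) / 2
        linarith
    _ ≤ Real.exp (-2 * (3 / 4 * r ^ 2) + 2 * (3 / 4 * r ^ 2) ^ 2) :=
      one_add_exp_neg_div_two_le_exp _
    _ ≤ Real.exp (-r ^ 2) := by
        gcongr
        nlinarith [sq_nonneg r]

theorem purity_maximalMinor_planeWave_le {n M ℓ : ℕ} (hM : 1 ≤ M) (hMn : M + 1 ≤ n)
    (hℓ : 2 * ℓ ≤ n) {z : Fin M → Circle} (hU : planeWave n z * (planeWave n z).conjTranspose = 1) :
    purity {x | x.val < ℓ} (maximalMinor (planeWave n z)) ≤ Real.exp (-(ℓ / n : ℝ) ^ 2) := by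
  have hn : (0 : ℝ) < n := mod_cast M.succ_pos.trans_le hMn
  have hfill : (n : ℝ) * (M / n) = M := mul_div_cancel₀ _ hn.ne'
  have hr : (ℓ / n : ℝ) ^ 2 ≤ 1 / 4 := by
    rw [div_pow, div_le_div_iff₀ (by positivity) (by norm_num)]
    exact_mod_cast (by nlinarith : ℓ ^ 2 * 4 ≤ 1 * n ^ 2)
  refine (purity_maximalMinor_le hU _).trans (one_add_exp_neg_div_two_le_exp_neg_sq hr ?_)
  refine three_fourths_mul_sq_le_numberVariance (isStarProjection_conjTranspose_mul_self hU)
    (f := fun d ↦ (n : ℂ)⁻¹ * ∑ j, (z j : ℂ) ^ d)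
    (fun x y hxy ↦ conjTranspose_planeWave_mul_apply hxy.le)
    re_conjTranspose_planeWave_mul_apply_self ?_ ?_ hℓ
  · rw [hfill]
    exact_mod_cast hM
  · rw [mul_sub, hfill, mul_one, le_sub_iff_add_le']
    exact_mod_cast hMn

end RenyiBound

/-- The second Rényi entropy of a plane-wave Slater determinant state on the
interval `A = {0,…,ℓ−1}` (with `1 ≤ ℓ ≤ n/2` and `1 ≤ M ≤ n−1` fermions) is at least `ℓ²/n²`.
Here `Tr(ρ_A²) = ∑_{S_A,S_A'} |ρ_A(S_A,S_A')|²` since `ρ_A` is Hermitian. -/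
theorem slater_renyi_entropy_bound
    (n M ℓ : ℕ) (hn : 2 ≤ n) (hM : 1 ≤ M) (hMn : M ≤ n - 1)
    (hℓ : 1 ≤ ℓ) (hhalf : 2 * ℓ ≤ n)
    (φ : ℝ) (k : Fin M → ℝ) (hkinj : Function.Injective k)
    (hk : ∀ j, ∃ m : ℕ, m < n ∧ k j = 2 * Real.pi * m / n)
    (A : Finset (Fin n)) (hA : A = Finset.univ.filter fun i : Fin n => (i : ℕ) < ℓ)
    (ρ : Finset (Fin n) → Finset (Fin n) → ℂ)
    (hρ : ∀ SA SA', ρ SA SA' = ∑ SB ∈ Aᶜ.powerset,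
      slater n M k φ (SA ∪ SB) * (starRingEnd ℂ) (slater n M k φ (SA' ∪ SB))) :
    -Real.log (∑ SA ∈ A.powerset, ∑ SA' ∈ A.powerset, Complex.normSq (ρ SA SA')) ≥
      (ℓ : ℝ) ^ 2 / (n : ℝ) ^ 2 := by
  obtain rfl : ρ = reducedDensity A (slater n M k φ) := by
    ext SA SA'
    exact hρ SA SA'
  subst hA
  have hU := planeWave_momentum_mul_conjTranspose (by omega) φ hkinj hk
  have hpos := purity_pos (A := Finset.univ.filter fun i : Fin n => (i : ℕ) < ℓ)
    (maximalMinor_ne_zero hU)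
  have hle := purity_maximalMinor_planeWave_le hM (by omega) hhalf hU
  rw [← slater_eq_maximalMinor] at hpos hle
  rw [ge_iff_le, le_neg, ← div_pow]
  exact (Real.log_le_iff_le_exp hpos).2 hle
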